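/- For every constant C < 3 there exists a graph G with gt(G)/gpack(G) > C. More precisely, for every ε > 0 there exists n such that gt(K_n □ K_n)/gpack(K_n □ K_n) ≥ 3 − ε. -/

import Mathlib

open SimpleGraph

/-- A geodesic (shortest path) in `G`: a path whose length equals the distance
between its endpoints. -/
def IsGeodesic {V : Type*} (G : SimpleGraph V) {u v : V} (p : G.Walk u v) : Prop :=
  p.IsPath ∧ p.length = G.dist u v

/-- A maximal geodesic: a geodesic that is not contained as a subpath of any longer
geodesic, equivalently it cannot be extended at either end to a longer geodesic. -/
def IsMaxGeodesic {V : Type*} (G : SimpleGraph V) {u v : V} (p : G.Walk u v) : Prop :=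
  IsGeodesic G p ∧
  (∀ w (h : G.Adj w u), ¬ IsGeodesic G (SimpleGraph.Walk.cons h p)) ∧
  (∀ w (h : G.Adj v w), ¬ IsGeodesic G (p.concat h))

/-- A set of vertices that is the vertex set of some maximal geodesic of `G`. -/
def IsMaxGeodesicSet {V : Type*} (G : SimpleGraph V) (s : Set V) : Prop :=
  ∃ (u v : V) (p : G.Walk u v), IsMaxGeodesic G p ∧ s = {x | x ∈ p.support}

/-- A geodesic packing: a family of pairwise vertex-disjoint maximal geodesics. -/
def IsGeodesicPacking {V : Type*} (G : SimpleGraph V) (P : Set (Set V)) : Prop :=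
  (∀ s ∈ P, IsMaxGeodesicSet G s) ∧ P.Pairwise Disjoint

/-- The geodesic packing number `gpack(G)`. -/
noncomputable def gpackNum {V : Type*} (G : SimpleGraph V) : ℕ :=
  sSup {k | ∃ P : Finset (Set V), IsGeodesicPacking G ↑P ∧ P.card = k}

/-- A geodesic transversal: a vertex set hitting every maximal geodesic. -/
def IsGeodesicTransversal {V : Type*} (G : SimpleGraph V) (S : Set V) : Prop :=
  ∀ s, IsMaxGeodesicSet G s → (S ∩ s).Nonempty

/-- The geodesic transversal number `gt(G)`. -/
noncomputable def gtransNum {V : Type*} (G : SimpleGraph V) : ℕ :=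
  sInf {k | ∃ S : Finset V, IsGeodesicTransversal G ↑S ∧ S.card = k}

/-!
For `n ≥ 2`, two cells of the `n × n` rook's graph on different rows and columns are at distance
two, and every shorter geodesic can be prolonged to one joining such a pair. So the maximal
geodesics have three cells, and a packing has at most `n² / 3` members. On the other hand every
L-shaped triple of cells is a maximal geodesic, so a cell missed by a transversal is the only missed
cell of its row or the only one of its column. A transversal therefore misses at most `2n` cells,
and the ratio is at least `3 - 6 / n`.
-/

open Filter Topology

theorem ncard_le_card_add_card_of_forall_eq_or_forall_eq {γ α β : Type*} [Finite α] [Finite β]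
    (f : γ → α) (g : γ → β) {T : Set γ}
    (h : ∀ x ∈ T, (∀ y ∈ T, f y = f x → y = x) ∨ ∀ y ∈ T, g y = g x → y = x) :
    T.ncard ≤ Nat.card α + Nat.card β := by
  set A := {x ∈ T | ∀ y ∈ T, f y = f x → y = x}
  set B := {x ∈ T | ∀ y ∈ T, g y = g x → y = x}
  have hT : T = A ∪ B := by
    ext x
    exact ⟨fun hx => (h x hx).imp (⟨hx, ·⟩) (⟨hx, ·⟩), fun hx => hx.elim (·.1) (·.1)⟩
  have hA : A.InjOn f := fun x hx y hy hxy => hy.2 x hx.1 hxy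
  have hB : B.InjOn g := fun x hx y hy hxy => hy.2 x hx.1 hxy
  calc T.ncard = (A ∪ B).ncard := congrArg Set.ncard hT
    _ ≤ A.ncard + B.ncard := Set.ncard_union_le A B
    _ = (f '' A).ncard + (g '' B).ncard := by rw [hA.ncard_image, hB.ncard_image]
    _ ≤ Nat.card α + Nat.card β := add_le_add (Set.ncard_le_card _) (Set.ncard_le_card _)

theorem dist_boxProd_of_preconnected {α β : Type*} {G : SimpleGraph α} {H : SimpleGraph β}
    (hG : G.Preconnected) (hH : H.Preconnected) (u v : α × β) :
    (G □ H).dist u v = G.dist u.1 v.1 + H.dist u.2 v.2 := by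
  simp only [SimpleGraph.dist, edist_boxProd]
  exact ENat.toNat_add (edist_ne_top_iff_reachable.2 (hG _ _))
    (edist_ne_top_iff_reachable.2 (hH _ _))

section Geodesic

variable {V : Type*} {G : SimpleGraph V} {u v w : V} {p : G.Walk u v}

theorem isGeodesic_iff_length_eq_dist : IsGeodesic G p ↔ p.length = G.dist u v :=
  ⟨And.right, fun h => ⟨p.isPath_of_length_eq_dist h, h⟩⟩

theorem IsGeodesic.ncard_support (hp : IsGeodesic G p) :
    {x | x ∈ p.support}.ncard = p.length + 1 := by
  classical
  rw [← List.coe_toFinset, Set.ncard_coe_finset, List.toFinset_card_of_nodup hp.1.support_nodup,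
    Walk.length_support]

theorem IsGeodesic.isMaxGeodesic_of_forall_dist_le (hp : IsGeodesic G p)
    (h : ∀ x y, G.dist x y ≤ p.length) : IsMaxGeodesic G p := by
  refine ⟨hp, fun w hw hg => ?_, fun w hw hg => ?_⟩
  · have hlen := isGeodesic_iff_length_eq_dist.1 hg
    have hdist := h w v
    rw [Walk.length_cons] at hlen
    omega
  · have hlen := isGeodesic_iff_length_eq_dist.1 hg
    have hdist := h u w
    rw [Walk.length_concat] at hlen
    omega

theorem IsMaxGeodesic.dist_ne_of_adj (hp : IsMaxGeodesic G p) (hw : G.Adj v w) :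
    G.dist u w ≠ G.dist u v + 1 := fun h =>
  hp.2.2 w hw <| isGeodesic_iff_length_eq_dist.2 <| by rw [Walk.length_concat, hp.1.2, h]

theorem IsMaxGeodesicSet.nonempty {s : Set V} (hs : IsMaxGeodesicSet G s) : s.Nonempty := by
  obtain ⟨u, v, p, -, rfl⟩ := hs
  exact ⟨u, p.start_mem_support⟩

end Geodesic

section PackingTransversal

variable {V : Type*} [Finite V] {G : SimpleGraph V}

theorem IsGeodesicPacking.card_mul_le {P : Finset (Set V)} (hP : IsGeodesicPacking G P) {k : ℕ}
    (hk : ∀ s ∈ P, k ≤ s.ncard) : P.card * k ≤ Nat.card V := by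
  calc P.card * k ≤ ∑ s ∈ P, s.ncard := by simpa using P.card_nsmul_le_sum Set.ncard k hk
    _ = (⋃ s ∈ (P : Set (Set V)), s).ncard := by
        rw [P.finite_toSet.ncard_biUnion (fun s _ => s.toFinite) hP.2, finsum_mem_coe_finset]
    _ ≤ Nat.card V := Set.ncard_le_card _

variable (G) in
theorem bddAbove_card_isGeodesicPacking :
    BddAbove {k | ∃ P : Finset (Set V), IsGeodesicPacking G ↑P ∧ P.card = k} := by
  have := Fintype.ofFinite (Set V)
  refine ⟨Fintype.card (Set V), ?_⟩
  rintro _ ⟨P, -, rfl⟩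
  exact P.card_le_univ

variable (G) in
theorem exists_isGeodesicPacking_card_eq_gpackNum :
    ∃ P : Finset (Set V), IsGeodesicPacking G P ∧ P.card = gpackNum G :=
  Nat.sSup_mem (s := {k | ∃ P : Finset (Set V), IsGeodesicPacking G ↑P ∧ P.card = k})
    ⟨0, ∅, ⟨by simp, by simp⟩, rfl⟩ (bddAbove_card_isGeodesicPacking G)

theorem IsGeodesicPacking.card_le_gpackNum {P : Finset (Set V)} (hP : IsGeodesicPacking G P) :
    P.card ≤ gpackNum G :=
  le_csSup (bddAbove_card_isGeodesicPacking G) ⟨P, hP, rfl⟩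

theorem gpackNum_mul_le {k : ℕ} (hk : ∀ s, IsMaxGeodesicSet G s → k ≤ s.ncard) :
    gpackNum G * k ≤ Nat.card V := by
  obtain ⟨P, hP, hcard⟩ := exists_isGeodesicPacking_card_eq_gpackNum G
  exact hcard ▸ hP.card_mul_le fun s hs => hk s (hP.1 s hs)

theorem IsMaxGeodesicSet.gpackNum_pos {s : Set V} (hs : IsMaxGeodesicSet G s) :
    0 < gpackNum G := by
  have hP : IsGeodesicPacking G (({s} : Finset (Set V)) : Set (Set V)) :=
    ⟨by simpa using hs, by simp⟩
  exact (Finset.card_pos.2 (Finset.singleton_nonempty s)).trans_le hP.card_le_gpackNum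

variable (G) in
theorem exists_isGeodesicTransversal_card_eq_gtransNum :
    ∃ S : Finset V, IsGeodesicTransversal G S ∧ S.card = gtransNum G := by
  have := Fintype.ofFinite V
  exact Nat.sInf_mem (s := {k | ∃ S : Finset V, IsGeodesicTransversal G ↑S ∧ S.card = k})
    ⟨_, Finset.univ, fun s hs => by simpa using hs.nonempty, rfl⟩

end PackingTransversal

/-- The rook's graph `K_α □ K_β`: the vertices are the cells of an `α × β` board, and two cells are
adjacent when they share exactly one coordinate. It is reducible, so that results about box products
apply to it directly. -/
abbrev rookGraph (α β : Type*) : SimpleGraph (α × β) :=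
  (⊤ : SimpleGraph α) □ (⊤ : SimpleGraph β)

section Rook

variable {α β : Type*}

theorem rookGraph_dist [DecidableEq α] [DecidableEq β] (u v : α × β) :
    (rookGraph α β).dist u v = (if u.1 = v.1 then 0 else 1) + (if u.2 = v.2 then 0 else 1) := by
  rw [dist_boxProd_of_preconnected preconnected_top preconnected_top, dist_top, dist_top]

theorem rookGraph_dist_le_two (u v : α × β) : (rookGraph α β).dist u v ≤ 2 := by
  classical
  rw [rookGraph_dist]
  split_ifs <;> simp

theorem isMaxGeodesicSet_rookGraph {a c : α} {b d : β} (hac : a ≠ c) (hbd : b ≠ d) :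
    IsMaxGeodesicSet (rookGraph α β) {(a, b), (a, d), (c, d)} := by
  classical
  have h₁ : (rookGraph α β).Adj (a, b) (a, d) := boxProd_adj_right.2 hbd
  have h₂ : (rookGraph α β).Adj (a, d) (c, d) := boxProd_adj_left.2 hac
  have hgeo : IsGeodesic (rookGraph α β) (.cons h₁ (.cons h₂ .nil)) :=
    isGeodesic_iff_length_eq_dist.2 (by simp [rookGraph_dist, hac, hbd])
  exact ⟨_, _, _, hgeo.isMaxGeodesic_of_forall_dist_le rookGraph_dist_le_two, by ext; simp⟩

theorem exists_adj_rookGraph_dist_eq_add_one [Nontrivial α] [Nontrivial β] {u v : α × β}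
    (h : (rookGraph α β).dist u v < 2) :
    ∃ w, (rookGraph α β).Adj v w ∧ (rookGraph α β).dist u w = (rookGraph α β).dist u v + 1 := by
  classical
  obtain ⟨a, b⟩ := u
  obtain ⟨c, d⟩ := v
  have hline : a = c ∨ b = d := by
    by_contra! hne
    simp [rookGraph_dist, hne.1, hne.2] at h
  rcases hline with rfl | rfl
  · obtain ⟨e, he⟩ := exists_ne a
    exact ⟨(e, d), boxProd_adj_left.2 he.symm, by simp [rookGraph_dist, he.symm, add_comm]⟩
  · obtain ⟨e, he⟩ := exists_ne b
    exact ⟨(c, e), boxProd_adj_right.2 he.symm, by simp [rookGraph_dist, he.symm]⟩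

theorem IsMaxGeodesicSet.three_le_ncard_of_rookGraph [Nontrivial α] [Nontrivial β]
    {s : Set (α × β)} (hs : IsMaxGeodesicSet (rookGraph α β) s) : 3 ≤ s.ncard := by
  obtain ⟨u, v, p, hp, rfl⟩ := hs
  have hlen : 2 ≤ p.length := by
    by_contra! hlt
    obtain ⟨w, hw, hdist⟩ := exists_adj_rookGraph_dist_eq_add_one (hp.1.2 ▸ hlt)
    exact hp.dist_ne_of_adj hw hdist
  rw [hp.1.ncard_support]
  omega

theorem IsGeodesicTransversal.forall_eq_or_forall_eq_of_notMem {S : Set (α × β)}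
    (hS : IsGeodesicTransversal (rookGraph α β) S) {x : α × β} (hx : x ∉ S) :
    (∀ y ∉ S, y.1 = x.1 → y = x) ∨ ∀ y ∉ S, y.2 = x.2 → y = x := by
  -- A second missed cell in the row of `x` and another in its column would form a missed L.
  by_contra! hne
  obtain ⟨⟨⟨a, b⟩, hy, rfl, hyx⟩, ⟨c, d⟩, hz, rfl, hzx⟩ := hne
  have hac : x.1 ≠ c := fun h => hzx (Prod.ext h.symm rfl)
  have hbd : b ≠ x.2 := fun h => hyx (Prod.ext rfl h)
  obtain ⟨t, htS, rfl | rfl | rfl⟩ := hS _ (isMaxGeodesicSet_rookGraph hac hbd)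
  exacts [hy htS, hx htS, hz htS]

variable [Finite α] [Finite β]

theorem IsGeodesicTransversal.ncard_compl_le_of_rookGraph {S : Set (α × β)}
    (hS : IsGeodesicTransversal (rookGraph α β) S) : Sᶜ.ncard ≤ Nat.card α + Nat.card β :=
  ncard_le_card_add_card_of_forall_eq_or_forall_eq Prod.fst Prod.snd fun _ hx =>
    hS.forall_eq_or_forall_eq_of_notMem hx

variable (α β)

theorem card_mul_card_le_gtransNum_rookGraph_add :
    Nat.card α * Nat.card β ≤ gtransNum (rookGraph α β) + (Nat.card α + Nat.card β) := by
  obtain ⟨S, hS, hcard⟩ := exists_isGeodesicTransversal_card_eq_gtransNum (rookGraph α β)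
  rw [← hcard, ← Set.ncard_coe_finset, ← Nat.card_prod,
    ← Set.ncard_add_ncard_compl (S : Set (α × β))]
  exact Nat.add_le_add_left hS.ncard_compl_le_of_rookGraph _

variable [Nontrivial α] [Nontrivial β]

theorem gpackNum_rookGraph_mul_three_le :
    gpackNum (rookGraph α β) * 3 ≤ Nat.card α * Nat.card β :=
  Nat.card_prod α β ▸ gpackNum_mul_le fun _ hs => hs.three_le_ncard_of_rookGraph

theorem gpackNum_rookGraph_pos : 0 < gpackNum (rookGraph α β) := by
  obtain ⟨a, c, hac⟩ := exists_pair_ne α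
  obtain ⟨b, d, hbd⟩ := exists_pair_ne β
  exact (isMaxGeodesicSet_rookGraph hac hbd).gpackNum_pos

theorem three_sub_le_gtransNum_div_gpackNum_rookGraph :
    (3 : ℝ) - (3 / Nat.card α + 3 / Nat.card β) ≤
      (gtransNum (rookGraph α β) : ℝ) / gpackNum (rookGraph α β) := by
  have hα : (2 : ℝ) ≤ Nat.card α := by exact_mod_cast Finite.one_lt_card (α := α)
  have hβ : (2 : ℝ) ≤ Nat.card β := by exact_mod_cast Finite.one_lt_card (α := β)
  have hpos : (0 : ℝ) < gpackNum (rookGraph α β) := by exact_mod_cast gpackNum_rookGraph_pos α β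
  have hpack : (gpackNum (rookGraph α β) : ℝ) * 3 ≤ Nat.card α * Nat.card β := by
    exact_mod_cast gpackNum_rookGraph_mul_three_le α β
  have htrans : (Nat.card α : ℝ) * Nat.card β ≤
      gtransNum (rookGraph α β) + (Nat.card α + Nat.card β) := by
    exact_mod_cast card_mul_card_le_gtransNum_rookGraph_add α β
  have hcoeff : (0 : ℝ) ≤ 1 - (1 / Nat.card α + 1 / Nat.card β) := by
    linarith [one_div_le_one_div_of_le two_pos hα, one_div_le_one_div_of_le two_pos hβ]
  rw [le_div_iff₀ hpos]
  calc ((3 : ℝ) - (3 / Nat.card α + 3 / Nat.card β)) * gpackNum (rookGraph α β)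
      = (1 - (1 / Nat.card α + 1 / Nat.card β)) * (gpackNum (rookGraph α β) * 3) := by ring
    _ ≤ (1 - (1 / Nat.card α + 1 / Nat.card β)) * (Nat.card α * Nat.card β) :=
        mul_le_mul_of_nonneg_left hpack hcoeff
    _ = Nat.card α * Nat.card β - (Nat.card α + Nat.card β) := by
        field_simp
        ring
    _ ≤ gtransNum (rookGraph α β) := sub_le_iff_le_add.2 htrans

end Rook

theorem ratio_unbounded_below_three_general {ε : ℝ} (hε : 0 < ε) :
    ∀ᶠ n : ℕ × ℕ in atTop,
      3 - ε ≤ (gtransNum (rookGraph (Fin n.1) (Fin n.2)) : ℝ) /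
        gpackNum (rookGraph (Fin n.1) (Fin n.2)) := by
  have hlim : Tendsto (fun n : ℕ × ℕ => (3 : ℝ) - (3 / n.1 + 3 / n.2)) atTop (𝓝 3) := by
    have hdiv := tendsto_const_div_atTop_nhds_zero_nat (3 : ℝ)
    rw [← prod_atTop_atTop_eq]
    simpa using ((hdiv.comp tendsto_fst).add (hdiv.comp tendsto_snd)).const_sub 3
  filter_upwards [hlim.eventually_const_le (sub_lt_self 3 hε), eventually_ge_atTop (2, 2)]
    with ⟨m, n⟩ hbound ⟨hm, hn⟩
  have := Fin.nontrivial_iff_two_le.2 hm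
  have := Fin.nontrivial_iff_two_le.2 hn
  have hratio := three_sub_le_gtransNum_div_gpackNum_rookGraph (Fin m) (Fin n)
  simp only [Nat.card_fin] at hratio
  exact hbound.trans hratio

theorem ratio_unbounded_below_three :
    ∀ ε : ℝ, 0 < ε → ∃ n : ℕ,
      (3 : ℝ) - ε ≤ (gtransNum ((⊤ : SimpleGraph (Fin n)) □ (⊤ : SimpleGraph (Fin n))) : ℝ) / (gpackNum ((⊤ : SimpleGraph (Fin n)) □ (⊤ : SimpleGraph (Fin n))) : ℝ) := by
  intro ε hε
  exact (tendsto_atTop_diagonal.eventually (ratio_unbounded_below_three_general hε)).exists
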